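/- arXiv:1308.2656 — 3 statements merged into one kernel-verified Lean document; each statement's English description precedes it below -/
import Mathlib

section
/- Let n ∈ ℕ, let f : {0,1}^n → ℝ, and let 0 < p < r < 1. Then ((p/r)·((1−r)/(1−p)))^n · Var_p(f) ≤ Var_r(E_{p/r}[f(ψ·ξ) | ψ]). -/
/-!
Write `T f = condExp p r f`, `c = (p/r)·((1-r)/(1-p)) ∈ (0,1]`. The operator `T` is a tensor power
of a one-bit operator, which maps constants to themselves, carries `E r (T f) = E p f`, and multiplies
the variance of a one-bit function by exactly `c`. On one bit this gives
`c · E p f² ≤ E r (T f)²`, and induction on the number of bits gives `c ^ n · E p f² ≤ E r (T f)²`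
(`second_moment_le`). Applying this to the centred function `f - E p f` yields the theorem, since
`T (f - E p f) = T f - E r (T f)`.
-/

open Finset Filter

namespace PartialObs

/-- Weight of a configuration `ω ∈ {0,1}^n` under the product measure `ℙ_p`. -/
noncomputable def w {n : ℕ} (p : ℝ) (ω : Fin n → Bool) : ℝ :=
  ∏ i, if ω i then p else 1 - p

/-- Expectation with respect to `ℙ_p`. -/
noncomputable def E {n : ℕ} (p : ℝ) (f : (Fin n → Bool) → ℝ) : ℝ :=
  ∑ ω : Fin n → Bool, w p ω * f ω

/-- Variance with respect to `ℙ_p`. -/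
noncomputable def Var {n : ℕ} (p : ℝ) (f : (Fin n → Bool) → ℝ) : ℝ :=
  E p (fun ω => (f ω - E p f) ^ 2)

/-- Coordinatewise product `ψ·ξ` of two configurations. -/
def prodCfg {n : ℕ} (ψ ξ : Fin n → Bool) : Fin n → Bool := fun i => ψ i && ξ i

/-- The conditional expectation `E_{p/r}[f(ψ·ξ) | ψ]`, as a function of `ψ`:
`ξ` is integrated out according to `ℙ_{p/r}`. -/
noncomputable def condExp {n : ℕ} (p r : ℝ) (f : (Fin n → Bool) → ℝ)
    (ψ : Fin n → Bool) : ℝ :=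
  E (p / r) (fun ξ => f (prodCfg ψ ξ))

/-- Splitting off the first bit. -/
lemma E_succ {n : ℕ} (p : ℝ) (f : (Fin (n + 1) → Bool) → ℝ) :
    E p f = (1 - p) * E p (fun ω : Fin n → Bool => f (Fin.cons false ω))
      + p * E p (fun ω : Fin n → Bool => f (Fin.cons true ω)) := by
  unfold E
  rw [← (Fin.consEquiv (fun _ : Fin (n + 1) => Bool)).sum_comp, Fintype.sum_prod_type,
    Fintype.sum_bool, Finset.mul_sum, Finset.mul_sum, add_comm]
  simp [w, Fin.consEquiv, Fin.prod_univ_succ, mul_assoc]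

lemma E_zero (p : ℝ) (f : (Fin 0 → Bool) → ℝ) : E p f = f default := by
  simp only [E, w, Finset.univ_unique, Finset.sum_singleton, Finset.prod_of_isEmpty, one_mul]
  exact congrArg f (Subsingleton.elim _ _)

lemma E_add {n : ℕ} (p : ℝ) (f g : (Fin n → Bool) → ℝ) :
    E p (fun ω => f ω + g ω) = E p f + E p g := by
  simp [E, mul_add, Finset.sum_add_distrib]

lemma E_const_mul {n : ℕ} (p a : ℝ) (f : (Fin n → Bool) → ℝ) :
    E p (fun ω => a * f ω) = a * E p f := by
  simp [E, Finset.mul_sum, mul_left_comm]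

lemma E_sub_const {n : ℕ} (p a : ℝ) (f : (Fin n → Bool) → ℝ) :
    E p (fun ω => f ω - a) = E p f - a := by
  induction n with
  | zero => simp [E_zero]
  | succ n ih => rw [E_succ, ih, ih, E_succ p f]; ring

lemma E_mono {n : ℕ} {p : ℝ} (hp : 0 ≤ p) (hp1 : p ≤ 1) {f g : (Fin n → Bool) → ℝ}
    (h : ∀ ω, f ω ≤ g ω) : E p f ≤ E p g := by
  refine Finset.sum_le_sum fun ω _ => mul_le_mul_of_nonneg_left (h ω) ?_
  refine Finset.prod_nonneg fun i _ => ?_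
  split_ifs <;> linarith

lemma prodCfg_cons {n : ℕ} (a b : Bool) (ψ ξ : Fin n → Bool) :
    prodCfg (Fin.cons a ψ : Fin (n + 1) → Bool) (Fin.cons b ξ) =
      Fin.cons (a && b) (prodCfg ψ ξ) := by
  funext i
  refine Fin.cases ?_ (fun j => ?_) i <;> simp [prodCfg]

lemma condExp_cons_false {n : ℕ} (p r : ℝ) (f : (Fin (n + 1) → Bool) → ℝ) (ψ : Fin n → Bool) :
    condExp p r f (Fin.cons false ψ) = condExp p r (fun ω => f (Fin.cons false ω)) ψ := by
  unfold condExp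
  rw [E_succ]
  simp only [prodCfg_cons, Bool.false_and]
  ring

lemma condExp_cons_true {n : ℕ} (p r : ℝ) (f : (Fin (n + 1) → Bool) → ℝ) (ψ : Fin n → Bool) :
    condExp p r f (Fin.cons true ψ) =
      (1 - p / r) * condExp p r (fun ω => f (Fin.cons false ω)) ψ
        + p / r * condExp p r (fun ω => f (Fin.cons true ω)) ψ := by
  unfold condExp
  rw [E_succ]
  simp only [prodCfg_cons, Bool.true_and]

/-- The product `ψ·ξ` has law `ℙ_p`. -/
lemma E_condExp {n : ℕ} (p r : ℝ) (hr : r ≠ 0) (f : (Fin n → Bool) → ℝ) :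
    E r (condExp p r f) = E p f := by
  induction n with
  | zero =>
    simp only [E_zero, condExp]
    congr 1
  | succ n ih =>
    rw [E_succ, E_succ p f]
    simp only [condExp_cons_false, condExp_cons_true]
    rw [E_add, E_const_mul, E_const_mul]
    have h (g : (Fin n → Bool) → ℝ) : E r (fun ψ => condExp p r g ψ) = E p g := ih g
    rw [h, h]
    field_simp
    ring

/-- The one-bit second moment bound; the difference of the two sides is `1 - c` times the squared
mean of the one-bit function with values `a`, `b`. -/
lemma one_bit_le (p r : ℝ) (hp : 0 < p) (hpr : p < r) (hr : r < 1) (a b : ℝ) :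
    (p / r * ((1 - r) / (1 - p))) * ((1 - p) * a ^ 2 + p * b ^ 2) ≤
      (1 - r) * a ^ 2 + r * ((1 - p / r) * a + p / r * b) ^ 2 := by
  have hr0 : 0 < r := hp.trans hpr
  have hp1 : 0 < 1 - p := by linarith
  have hc : p / r * ((1 - r) / (1 - p)) ≤ 1 := by
    rw [div_mul_div_comm, div_le_one (by positivity)]
    nlinarith
  have key : (1 - r) * a ^ 2 + r * ((1 - p / r) * a + p / r * b) ^ 2
      - (p / r * ((1 - r) / (1 - p))) * ((1 - p) * a ^ 2 + p * b ^ 2)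
      = (1 - p / r * ((1 - r) / (1 - p))) * ((1 - p) * a + p * b) ^ 2 := by
    field_simp
    ring
  have := mul_nonneg (sub_nonneg.2 hc) (sq_nonneg ((1 - p) * a + p * b))
  linarith

/-- Tensorization of `one_bit_le`. -/
lemma second_moment_le {n : ℕ} (p r : ℝ) (hp : 0 < p) (hpr : p < r) (hr : r < 1)
    (f : (Fin n → Bool) → ℝ) :
    (p / r * ((1 - r) / (1 - p))) ^ n * E p (fun ω => f ω ^ 2) ≤
      E r (fun ψ => condExp p r f ψ ^ 2) := by
  have hr0 : 0 < r := hp.trans hpr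
  have hp1 : 0 < 1 - p := by linarith
  have hr1 : 0 < 1 - r := by linarith
  induction n with
  | zero =>
    simp only [E_zero, condExp, pow_zero, one_mul]
    rw [Subsingleton.elim (prodCfg default default) default]
  | succ n ih =>
    set c := p / r * ((1 - r) / (1 - p)) with hcdef
    have hc : 0 ≤ c := by positivity
    set f₀ : (Fin n → Bool) → ℝ := fun ω => f (Fin.cons false ω)
    set f₁ : (Fin n → Bool) → ℝ := fun ω => f (Fin.cons true ω)
    calc c ^ (n + 1) * E p (fun ω => f ω ^ 2)
        = c * ((1 - p) * (c ^ n * E p (fun ω => f₀ ω ^ 2))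
            + p * (c ^ n * E p (fun ω => f₁ ω ^ 2))) := by
          rw [E_succ]; ring
      _ ≤ c * ((1 - p) * E r (fun ψ => condExp p r f₀ ψ ^ 2)
            + p * E r (fun ψ => condExp p r f₁ ψ ^ 2)) := by
          gcongr
          · exact ih f₀
          · exact ih f₁
      _ = E r (fun ψ => c * ((1 - p) * condExp p r f₀ ψ ^ 2
            + p * condExp p r f₁ ψ ^ 2)) := by
          rw [E_const_mul, E_add, E_const_mul, E_const_mul]
      _ ≤ E r (fun ψ => (1 - r) * condExp p r f₀ ψ ^ 2
            + r * ((1 - p / r) * condExp p r f₀ ψ + p / r * condExp p r f₁ ψ) ^ 2) :=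
          E_mono hr0.le hr.le fun ψ => one_bit_le p r hp hpr hr _ _
      _ = E r (fun ψ => condExp p r f ψ ^ 2) := by
          rw [E_succ, E_add, E_const_mul, E_const_mul]
          simp only [condExp_cons_false, condExp_cons_true, f₀, f₁]

/-- the two-scale variance lower bound
`((p/r)·((1−r)/(1−p)))^n · Var_p(f) ≤ Var_r(E_{p/r}[f(ψ·ξ) | ψ])`. -/
theorem two_scale_variance_lower_bound {n : ℕ} (f : (Fin n → Bool) → ℝ)
    (p r : ℝ) (hp : 0 < p) (hpr : p < r) (hr : r < 1) :
    (p / r * ((1 - r) / (1 - p))) ^ n * Var p f ≤ Var r (condExp p r f) := by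
  have hr0 : r ≠ 0 := (hp.trans hpr).ne'
  have h := second_moment_le p r hp hpr hr (fun ω => f ω - E p f)
  have hT (ψ : Fin n → Bool) :
      condExp p r (fun ω => f ω - E p f) ψ = condExp p r f ψ - E p f :=
    E_sub_const _ _ _
  simp only [hT] at h
  unfold Var
  rwa [E_condExp p r hr0]

end PartialObs
end

section
/- Let n ∈ ℕ, p ∈ (0,1), ε ∈ (0,1), and set r = p/(1 − ε(1−p)) (so that r ∈ (p,1)). Then for every function f : {0,1}^n → ℝ, E_p[f(ω) f(ω^ε)] − E_p[f(ω)]² = Var_r(E_{p/r}[f(ψ·ξ) | ψ]). -/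
/-!
Writing `q = p / r`, the conditional expectation is an average against a product kernel,
`condExp p r f ψ = ∑ a, thinK q ψ a * f a`, where `thinK q ψ a` is the probability that `ψ·ξ = a`.
Two independent thinnings `ψ·ξ`, `ψ·ξ'` of the same `ψ ∼ ℙ_r` have exactly the joint law of
`(ω, ω^ε)`: by independence of the coordinates this is a statement about one coordinate, where it
follows from `r * q = p` and `r * q ^ 2 = p * (1 - ε * (1 - p))` (`sum_w_thinK_thinK`). Each single
thinning has law `ℙ_p` (`sum_w_thinK`). Hence `E_r[condExp ^ 2] = E_p[f(ω) f(ω^ε)]` and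
`E_r[condExp] = E_p[f]`, and the identity is `Var = E[X ^ 2] - (E[X]) ^ 2`.
-/


open Finset Filter

namespace PartialObs

/-- Joint probability mass of the pair `(ω, ω^ε)` at `(a, b)`, where `ω ∼ ℙ_p` and
`ω^ε` is obtained from `ω` by independently resampling each coordinate with
probability `ε` (the resampled value being `1` with probability `p`). -/
noncomputable def pairW {n : ℕ} (p ε : ℝ) (a b : Fin n → Bool) : ℝ :=
  ∏ i, (if a i then p else 1 - p) *
    ((1 - ε) * (if a i = b i then 1 else 0) + ε * (if b i then p else 1 - p))

/-- Expectation `E_p[F(ω, ω^ε)]` over the joint law of `(ω, ω^ε)`. -/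
noncomputable def E2 {n : ℕ} (p ε : ℝ)
    (F : (Fin n → Bool) → (Fin n → Bool) → ℝ) : ℝ :=
  ∑ a : Fin n → Bool, ∑ b : Fin n → Bool, pairW p ε a b * F a b

/-- The quantity `E_p[f(ω) f(ω^ε)] − E_p[f(ω)]²`. -/
noncomputable def noiseCov {n : ℕ} (p ε : ℝ) (f : (Fin n → Bool) → ℝ) : ℝ :=
  E2 p ε (fun a b => f a * f b) - (E p f) ^ 2

/-- Noise sensitivity at intensity `p`: for every `ε ∈ (0,1)`,
`E_p[f_n(ω) f_n(ω^ε)] − E_p[f_n(ω)]² → 0` as `n → ∞`. -/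
def NS (p : ℝ) (f : ∀ n, (Fin n → Bool) → ℝ) : Prop :=
  ∀ ε ∈ Set.Ioo (0 : ℝ) 1,
    Tendsto (fun n => noiseCov p ε (f n)) atTop (nhds 0)

/-- Independence of coordinates: a sum over the cube of a product factorizes. -/
lemma sum_prod_cube {n : ℕ} (g : Fin n → Bool → ℝ) :
    ∑ ω : Fin n → Bool, ∏ i, g i (ω i) = ∏ i, (g i true + g i false) := by
  simp_rw [← Fintype.sum_bool]
  rw [Finset.prod_univ_sum, Fintype.piFinset_univ]

lemma sum_w {n : ℕ} (p : ℝ) : ∑ ω : Fin n → Bool, w p ω = 1 := by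
  unfold w
  rw [sum_prod_cube (fun _ x => if x then p else 1 - p)]
  simp

lemma Var_eq {n : ℕ} (p : ℝ) (g : (Fin n → Bool) → ℝ) :
    Var p g = E p (fun ω => g ω * g ω) - (E p g) ^ 2 := by
  have h : Var p g = E p (fun ω => g ω * g ω) - 2 * E p g * E p g
      + (E p g) ^ 2 * ∑ ω : Fin n → Bool, w p ω := by
    unfold Var
    generalize hm : E p g = m
    nth_rewrite 3 [← hm]
    simp only [E, Finset.mul_sum]
    rw [← Finset.sum_sub_distrib, ← Finset.sum_add_distrib]
    exact Finset.sum_congr rfl fun ω _ => by ring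
  rw [h, sum_w]
  ring

/-- The thinning kernel: the probability that `ψ·ξ = a` when `ξ ∼ ℙ_q`. -/
noncomputable def thinK {n : ℕ} (q : ℝ) (ψ a : Fin n → Bool) : ℝ :=
  ∏ i, if ψ i then (if a i then q else 1 - q) else (if a i then 0 else 1)

lemma thinK_eq_sum {n : ℕ} (q : ℝ) (ψ a : Fin n → Bool) :
    thinK q ψ a = ∑ ξ : Fin n → Bool, if prodCfg ψ ξ = a then w q ξ else 0 := by
  have h : ∀ ξ : Fin n → Bool, (if prodCfg ψ ξ = a then w q ξ else 0)
      = ∏ i, if (ψ i && ξ i) = a i then (if ξ i then q else 1 - q) else 0 := by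
    intro ξ
    rw [Finset.prod_ite_zero]
    simp [w, prodCfg, funext_iff]
  simp_rw [h]
  rw [sum_prod_cube (fun i x => if (ψ i && x) = a i then (if x then q else 1 - q) else 0)]
  refine Finset.prod_congr rfl fun i _ => ?_
  cases ψ i <;> cases a i <;> simp

lemma condExp_eq_sum {n : ℕ} (p r : ℝ) (f : (Fin n → Bool) → ℝ) (ψ : Fin n → Bool) :
    condExp p r f ψ = ∑ a, thinK (p / r) ψ a * f a := by
  simp_rw [thinK_eq_sum, Finset.sum_mul]
  rw [Finset.sum_comm]
  simp [condExp, E, ite_mul]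

/-- The thinning `ψ·ξ` of `ψ ∼ ℙ_r` with `ξ ∼ ℙ_q` has law `ℙ_{rq}`. -/
lemma sum_w_thinK {n : ℕ} (p r q : ℝ) (h : r * q = p) (a : Fin n → Bool) :
    ∑ ψ, w r ψ * thinK q ψ a = w p a := by
  simp only [w, thinK, ← Finset.prod_mul_distrib]
  rw [sum_prod_cube (fun i x => (if x then r else 1 - r) *
    (if x then (if a i then q else 1 - q) else (if a i then 0 else 1)))]
  refine Finset.prod_congr rfl fun i _ => ?_
  subst h
  cases a i <;> simp
  ring

/-- Two conditionally independent thinnings of the same `ψ ∼ ℙ_r` are jointly distributed as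
`(ω, ω^ε)`. -/
lemma sum_w_thinK_thinK {n : ℕ} (p ε r q : ℝ) (h : r * q = p)
    (h2 : r * q ^ 2 = p * (1 - ε * (1 - p))) (a b : Fin n → Bool) :
    ∑ ψ, w r ψ * (thinK q ψ a * thinK q ψ b) = pairW p ε a b := by
  simp only [w, thinK, pairW, ← Finset.prod_mul_distrib]
  rw [sum_prod_cube (fun i x => (if x then r else 1 - r) *
    ((if x then (if a i then q else 1 - q) else (if a i then 0 else 1)) *
     (if x then (if b i then q else 1 - q) else (if b i then 0 else 1))))]
  refine Finset.prod_congr rfl fun i _ => ?_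
  cases a i <;> cases b i <;> simp
  · linear_combination h2 - 2 * h
  · linear_combination h - h2
  · linear_combination h - h2
  · linear_combination h2

/-- with `r = p/(1 − ε(1−p))`,
`E_p[f(ω) f(ω^ε)] − E_p[f(ω)]² = Var_r(E_{p/r}[f(ψ·ξ) | ψ])`. -/
theorem noiseCov_eq_two_scale_variance {n : ℕ} (p ε : ℝ)
    (hp : p ∈ Set.Ioo (0 : ℝ) 1) (hε : ε ∈ Set.Ioo (0 : ℝ) 1)
    (r : ℝ) (hr : r = p / (1 - ε * (1 - p)))
    (f : (Fin n → Bool) → ℝ) :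
    noiseCov p ε f = Var r (condExp p r f) := by
  obtain ⟨hp0, hp1⟩ := hp
  obtain ⟨hε0, hε1⟩ := hε
  have hd : 0 < 1 - ε * (1 - p) := by nlinarith
  have hr0 : r ≠ 0 := by rw [hr]; positivity
  have h : r * (p / r) = p := mul_div_cancel₀ p hr0
  have hq : p / r = 1 - ε * (1 - p) := by rw [hr]; field_simp
  have h2 : r * (p / r) ^ 2 = p * (1 - ε * (1 - p)) := by
    rw [sq, ← mul_assoc, h, hq]
  have hE : E r (condExp p r f) = E p f := by
    unfold E
    simp_rw [condExp_eq_sum, Finset.mul_sum]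
    rw [Finset.sum_comm]
    simp_rw [← mul_assoc, ← Finset.sum_mul, sum_w_thinK p r _ h]
  have hE2 : E r (fun ψ => condExp p r f ψ * condExp p r f ψ)
      = E2 p ε (fun a b => f a * f b) := by
    unfold E E2
    simp_rw [← sum_w_thinK_thinK p ε r _ h h2, condExp_eq_sum, Finset.sum_mul_sum,
      Finset.mul_sum, Finset.sum_mul]
    rw [Finset.sum_comm]
    refine Finset.sum_congr rfl fun a _ => ?_
    rw [Finset.sum_comm]
    exact Finset.sum_congr rfl fun b _ => Finset.sum_congr rfl fun ψ _ => by ring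
  rw [Var_eq, hE, hE2, noiseCov]

end PartialObs
end

section
/- Let n ∈ ℕ and 0 < p < r < 1. For all S, S' ⊆ {1,…,n}, E_r[E_{p/r}[χ_S^p(ψ·ξ) | ψ] · χ_{S'}^r(ψ)] equals ((p/r)·((1−r)/(1−p)))^{|S|/2} if S = S', and equals 0 if S ≠ S'. -/
/-!
Both expectations factor over coordinates (`E_prod`), so the correlation is a product over `i` of
one-coordinate correlations. Write `h(x)` for the conditional expectation of `χ_i^p` given
`ψ_i = x`; then `h(0) = b` and `h(1) = -b (1 - r) / r` with `b = √(p / (1 - p))`, so that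
`h = b √((1 - r) / r) χ_i^r`. A coordinate lying in exactly one of `S`, `S'` therefore contributes
the mean of a multiple of `χ_i^r`, which vanishes, and a coordinate lying in both contributes
`b √((1 - r) / r) = √((p / r) ((1 - r) / (1 - p)))`.
-/

open Finset Filter

namespace PartialObs

/-- The character `χ_S^p(ω) = ∏_{i ∈ S} χ_i^p(ω)`, where `χ_i^p(ω) = -√((1-p)/p)`
if `ω_i = 1` and `√(p/(1-p))` if `ω_i = 0`. -/
noncomputable def chi {n : ℕ} (p : ℝ) (S : Finset (Fin n)) (ω : Fin n → Bool) : ℝ :=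
  ∏ i ∈ S, if ω i then -Real.sqrt ((1 - p) / p) else Real.sqrt (p / (1 - p))

/-- The Fourier coefficient `f̂^p(S) = E_p[f · χ_S^p]`. -/
noncomputable def fourier {n : ℕ} (p : ℝ) (f : (Fin n → Bool) → ℝ)
    (S : Finset (Fin n)) : ℝ :=
  E p (fun ω => f ω * chi p S ω)

/-- Independence of the coordinates: the expectation of a product of functions of the single
coordinates is the product of their expectations. -/
lemma E_prod {n : ℕ} (p : ℝ) (g : Fin n → Bool → ℝ) :
    E p (fun ω => ∏ i, g i (ω i)) = ∏ i, (p * g i true + (1 - p) * g i false) := by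
  have h : ∀ i, p * g i true + (1 - p) * g i false
      = ∑ x : Bool, (if x then p else 1 - p) * g i x := by
    intro i; simp
  simp only [h, E, w, ← Finset.prod_mul_distrib]
  rw [Finset.prod_univ_sum, Fintype.piFinset_univ]

/-- `χ_S^p` as a product over all coordinates, with factor `1` outside `S`. -/
lemma chi_eq_prod {n : ℕ} (p : ℝ) (S : Finset (Fin n)) (ω : Fin n → Bool) :
    chi p S ω = ∏ i, (if i ∈ S then
      (if ω i then -Real.sqrt ((1 - p) / p) else Real.sqrt (p / (1 - p))) else 1) := by
  rw [chi, Finset.prod_ite_mem, Finset.univ_inter]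

lemma sqrt_odds_inv (p : ℝ) (hp : 0 < p) (hp1 : p < 1) :
    Real.sqrt ((1 - p) / p) = (1 - p) / p * Real.sqrt (p / (1 - p)) := by
  have h1 : 0 < 1 - p := by linarith
  rw [Real.sqrt_eq_iff_eq_sq (by positivity) (by positivity), mul_pow,
    Real.sq_sqrt (by positivity)]
  field_simp

/-- The one-coordinate conditional expectation `E[χ_i^p(ψ·ξ) | ψ_i = 1]` in closed form. -/
lemma cond_one (p r : ℝ) (hp : 0 < p) (hpr : p < r) (hr : r < 1) :
    p / r * -Real.sqrt ((1 - p) / p) + (1 - p / r) * Real.sqrt (p / (1 - p))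
      = -((1 - r) / r * Real.sqrt (p / (1 - p))) := by
  have hr0 : 0 < r := hp.trans hpr
  rw [sqrt_odds_inv p hp (hpr.trans hr)]
  field_simp
  ring

lemma condExp_chi {n : ℕ} (p r : ℝ) (hp : 0 < p) (hpr : p < r) (hr : r < 1)
    (S : Finset (Fin n)) (ψ : Fin n → Bool) :
    condExp p r (chi p S) ψ = ∏ i, (if i ∈ S then
      (if ψ i then -((1 - r) / r * Real.sqrt (p / (1 - p))) else Real.sqrt (p / (1 - p)))
      else 1) := by
  have h := E_prod (p / r) (fun i (x : Bool) => if i ∈ S then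
      (if (ψ i && x) then -Real.sqrt ((1 - p) / p) else Real.sqrt (p / (1 - p))) else 1)
  simp only [condExp, chi_eq_prod]
  refine Eq.trans h ?_
  refine Finset.prod_congr rfl fun i _ => ?_
  by_cases hi : i ∈ S
  · cases hψ : ψ i
    · simp [hi]; ring
    · simpa [hi] using cond_one p r hp hpr hr
  · simp [hi]

/-- `E_r[E_{p/r}[χ_S^p(ψ·ξ) | ψ] · χ_{S'}^r(ψ)]` equals
`((p/r)·((1−r)/(1−p)))^{|S|/2}` if `S = S'`, and `0` otherwise. -/
theorem two_scale_chi_correlation {n : ℕ} (p r : ℝ)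
    (hp : 0 < p) (hpr : p < r) (hr : r < 1)
    (S S' : Finset (Fin n)) :
    E r (fun ψ => condExp p r (chi p S) ψ * chi r S' ψ)
      = if S = S' then (p / r * ((1 - r) / (1 - p))) ^ ((S.card : ℝ) / 2)
        else 0 := by
  have hr0 : 0 < r := hp.trans hpr
  have h1r : 0 < 1 - r := by linarith
  have h1p : 0 < 1 - p := by linarith
  simp only [condExp_chi p r hp hpr hr, chi_eq_prod r, ← Finset.prod_mul_distrib]
  rw [E_prod r (fun i (x : Bool) =>
    (if i ∈ S then (if x then -((1 - r) / r * Real.sqrt (p / (1 - p)))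
      else Real.sqrt (p / (1 - p))) else 1) *
    (if i ∈ S' then (if x then -Real.sqrt ((1 - r) / r) else Real.sqrt (r / (1 - r))) else 1))]
  by_cases hS : S = S'
  · subst hS
    rw [if_pos (rfl : S = S)]
    have hfac :
        r * (-((1 - r) / r * Real.sqrt (p / (1 - p))) * -Real.sqrt ((1 - r) / r))
          + (1 - r) * (Real.sqrt (p / (1 - p)) * Real.sqrt (r / (1 - r)))
        = Real.sqrt (p / r * ((1 - r) / (1 - p))) := by
      have hbc : p / r * ((1 - r) / (1 - p)) = p / (1 - p) * ((1 - r) / r) := by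
        field_simp
      rw [hbc, Real.sqrt_mul (by positivity), sqrt_odds_inv r hr0 hr]
      field_simp
      ring
    have hprod : (p / r * ((1 - r) / (1 - p))) ^ ((S.card : ℝ) / 2)
        = ∏ i, (if i ∈ S then Real.sqrt (p / r * ((1 - r) / (1 - p))) else 1) := by
      rw [Finset.prod_ite_mem, Finset.univ_inter, Finset.prod_const, Real.sqrt_eq_rpow,
        ← Real.rpow_natCast, ← Real.rpow_mul (by positivity)]
      congr 1
      ring
    rw [hprod]
    refine Finset.prod_congr rfl fun i _ => ?_
    by_cases hi : i ∈ S
    · simp only [hi, if_true, if_false, Bool.false_eq_true]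
      exact hfac
    · simp [hi]
  · rw [if_neg hS]
    obtain ⟨i, hi⟩ : ∃ i, ¬(i ∈ S ↔ i ∈ S') := by
      by_contra! h
      exact hS (Finset.ext h)
    refine Finset.prod_eq_zero (Finset.mem_univ i) ?_
    by_cases h : i ∈ S
    · have h' : i ∉ S' := fun h' => hi ⟨fun _ => h', fun _ => h⟩
      simp only [h, h', if_true, if_false, Bool.false_eq_true]
      field_simp
      ring
    · have h' : i ∈ S' := by tauto
      simp only [h, h', if_true, if_false, Bool.false_eq_true]
      rw [sqrt_odds_inv r hr0 hr]
      field_simp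
      ring

end PartialObs
end
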